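/- Mollification identity with rotations (identity (BIGE1)): Let η ∈ C_c^∞((−1,1)) be even with 0 ≤ η ≤ 1, η ≡ 1 in a neighbourhood of 0 and ∫η = 1, and η_ε(t) = η(t/ε)/ε. Let θ ∈ W^{1,∞}(ℝ;ℝ) and Q(t) the 2×2 rotation matrix of angle θ(t). Let l : ℝ → ℝ² be bounded, continuous, and compactly supported, and let τ > 0. Define l_ε(t) = Q(t)∫_ℝ η_ε(t−s) Q(s)ᵀ l(s) ds and L_ε(s) = ∫_ℝ η_ε(s−t) Q(s) Q(t)ᵀ l_ε(t) dt. Then, as ε → 0, ∫₀^τ l_ε'(t)·l_ε(t) dt = −∫₀^τ l(s)·L_ε'(s) ds + l(τ)·L_ε(τ) − l(0)·L_ε(0) + o(1). -/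

import Mathlib

noncomputable section
open MeasureTheory Set Filter Topology

abbrev V2 : Type := EuclideanSpace ℝ (Fin 2)

/-- the mollifier `η_ε(t) = η(t/ε)/ε` -/
def moll (η : ℝ → ℝ) (ε : ℝ) (t : ℝ) : ℝ := η (t / ε) / ε

/-- the planar rotation of angle `θ` -/
def rot2 (θ : ℝ) (x : V2) : V2 :=
  !₂[Real.cos θ * x 0 - Real.sin θ * x 1, Real.sin θ * x 0 + Real.cos θ * x 1]

def dot2 (a b : V2) : ℝ := a 0 * b 0 + a 1 * b 1

/-- `l_ε(t) = Q(t) ∫ η_ε(t-s) Q(s)ᵀ l(s) ds` -/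
def lmoll (η : ℝ → ℝ) (θ : ℝ → ℝ) (l : ℝ → V2) (ε : ℝ) (t : ℝ) : V2 :=
  rot2 (θ t) (∫ s : ℝ, moll η ε (t - s) • rot2 (-(θ s)) (l s))

/-- `L_ε(s) = ∫ η_ε(s-t) Q(s) Q(t)ᵀ l_ε(t) dt` -/
def Lmoll (η : ℝ → ℝ) (θ : ℝ → ℝ) (l : ℝ → V2) (ε : ℝ) (s : ℝ) : V2 :=
  ∫ t : ℝ, moll η ε (s - t) • rot2 (θ s) (rot2 (-(θ t)) (lmoll η θ l ε t))

/-- the componentwise time derivative of a planar curve -/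
def dVec (f : ℝ → V2) (t : ℝ) : V2 := !₂[deriv (fun s => f s 0) t, deriv (fun s => f s 1) t]

/-! Write `M_k l = Q (k_ε ∗ Qᵀ l)`, so that `l_ε = M_η l` and `L_ε = M_η (M_η l) = M_{η ⋆ η} l`,
where `η ⋆ η` is again an even kernel of mass one. Since `Qᵀ Q'` is skew, `M_k l · (M_k l)'` is
a.e. the derivative of `‖k_ε ∗ Qᵀ l‖² / 2`, so its integral tends to half the increment `Δ` of
`‖l‖²`. The integral of `l · (M_k l)'` has the same limit: up to a term bounded by
`‖k_ε ∗ g - g‖`, again by skewness, it is `∫ g · (k_ε ∗ g)'` for `g = Qᵀ l`, and as the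
derivative of `k` is odd, the bulk contributions of size `1 / ε` cancel in pairs, leaving boundary
correlations of `g`. So the left side tends to `Δ / 2` and the right side to `-Δ / 2 + Δ`. -/

open ContinuousLinearMap (lsmul)
open scoped Convolution

section Mollification

variable {E : Type*} [NormedAddCommGroup E] [NormedSpace ℝ E] {k : ℝ → ℝ} {g : ℝ → E} {ε : ℝ}

/-- The mollification `k_ε ∗ g` of a curve `g`, where `k_ε(t) = k(t/ε)/ε`. -/
def mollify (k : ℝ → ℝ) (ε : ℝ) (g : ℝ → E) (t : ℝ) : E := ∫ s : ℝ, moll k ε (t - s) • g s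

-- Rescaling the curve instead of the kernel gives access to the convolution API at fixed `k`.
theorem mollify_eq_convolution_comp_mul (k : ℝ → ℝ) (g : ℝ → E) (hε : 0 < ε) :
    mollify k ε g = fun t => (k ⋆ fun s => g (ε * s)) (t / ε) := by
  funext t
  have hscale := Measure.integral_comp_mul_left (fun s => k ((t - s) / ε) • g s) ε
  rw [abs_of_pos (inv_pos.2 hε)] at hscale
  simp only [convolution_eq_swap, ContinuousLinearMap.lsmul_apply, mollify, moll]
  calc ∫ s, (k ((t - s) / ε) / ε) • g s
      = ε⁻¹ • ∫ s, k ((t - s) / ε) • g s := by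
        rw [← integral_smul]
        simp only [smul_smul, div_eq_inv_mul]
    _ = ∫ s, k ((t - ε * s) / ε) • g (ε * s) := hscale.symm
    _ = ∫ s, k (t / ε - s) • g (ε * s) := by
        simp only [sub_div, mul_div_cancel_left₀ _ hε.ne']

theorem mollify_apply (k : ℝ → ℝ) (g : ℝ → E) (hε : 0 < ε) (t : ℝ) :
    mollify k ε g t = ∫ u, k u • g (t - ε * u) := by
  simp only [mollify_eq_convolution_comp_mul k g hε, convolution_def,
    ContinuousLinearMap.lsmul_apply, mul_sub, mul_div_cancel₀ _ hε.ne']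

theorem continuous_mollify (hk : Continuous k) (hk_supp : HasCompactSupport k) (hg : Continuous g)
    (hε : 0 < ε) : Continuous (mollify k ε g) := by
  rw [mollify_eq_convolution_comp_mul k g hε]
  have hgε : Continuous fun s => g (ε * s) := by fun_prop
  exact (hk_supp.continuous_convolution_left _ hk hgε.locallyIntegrable).comp
    (continuous_id.div_const ε)

theorem contDiff_mollify (hk : ContDiff ℝ 1 k) (hk_supp : HasCompactSupport k)
    (hg : Continuous g) (hε : 0 < ε) : ContDiff ℝ 1 (mollify k ε g) := by
  rw [mollify_eq_convolution_comp_mul k g hε]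
  have hgε : Continuous fun s => g (ε * s) := by fun_prop
  exact (hk_supp.contDiff_convolution_left _ hk hgε.locallyIntegrable).comp
    (contDiff_id.div_const ε)

theorem deriv_mollify (hk : ContDiff ℝ 1 k) (hk_supp : HasCompactSupport k) (hg : Continuous g)
    (hε : 0 < ε) : deriv (mollify k ε g) = ε⁻¹ • mollify (deriv k) ε g := by
  simp only [mollify_eq_convolution_comp_mul _ g hε]
  funext t
  have hgε : Continuous fun s => g (ε * s) := by fun_prop
  have hconv := hk_supp.hasDerivAt_convolution_left (μ := volume) (lsmul ℝ ℝ) hk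
    hgε.locallyIntegrable (t / ε)
  simpa only [one_div, Function.comp_def, id, Pi.smul_apply] using
    (hconv.scomp t ((hasDerivAt_id t).div_const ε)).deriv

theorem mollify_mollify [CompleteSpace E] {k' : ℝ → ℝ} (hk : Continuous k)
    (hk_supp : HasCompactSupport k) (hk' : Continuous k') (hk'_supp : HasCompactSupport k')
    (hg : Continuous g) (hε : 0 < ε) :
    mollify k ε (mollify k' ε g) = mollify (k ⋆ k') ε g := by
  simp only [mollify_eq_convolution_comp_mul _ _ hε, mul_div_cancel_left₀ _ hε.ne']
  have hh : Continuous fun s => g (ε * s) := by fun_prop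
  have hconv : Continuous ((fun x => ‖k' x‖) ⋆ fun s => ‖g (ε * s)‖) :=
    hk'_supp.norm.continuous_convolution_left _ hk'.norm hh.norm.locallyIntegrable
  funext t
  refine (convolution_assoc (lsmul ℝ ℝ) (lsmul ℝ ℝ) (lsmul ℝ ℝ) (lsmul ℝ ℝ)
    (fun x y z => mul_smul x y z) hk.aestronglyMeasurable hk'.aestronglyMeasurable
    hh.aestronglyMeasurable ?_ ?_ ?_).symm
  · exact .of_forall (hk_supp.convolutionExists_left _ hk hk'.locallyIntegrable)
  · exact .of_forall
      (hk'_supp.norm.convolutionExists_left _ hk'.norm hh.norm.locallyIntegrable)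
  · exact hk_supp.norm.convolutionExists_left _ hk.norm hconv.locallyIntegrable _

theorem continuous_integral_smul_of_hasCompactSupport {X Y : Type*} [TopologicalSpace X]
    [TopologicalSpace Y] [MeasurableSpace Y] [OpensMeasurableSpace Y] {μ : Measure Y}
    [IsFiniteMeasureOnCompacts μ] {k : Y → ℝ} (hk : Continuous k) (hk_supp : HasCompactSupport k)
    {f : X → Y → E} (hf : Continuous (Function.uncurry f)) :
    Continuous fun x => ∫ y, k y • f x y ∂μ := by
  rw [← continuousOn_univ]
  refine continuousOn_integral_of_compact_support hk_supp.isCompact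
    ((hk.comp continuous_snd).smul hf).continuousOn fun x y _ hy => ?_
  rw [image_eq_zero_of_notMem_tsupport hy, zero_smul]

theorem tendsto_mollify [CompleteSpace E] (hk : Continuous k) (hk_supp : HasCompactSupport k)
    (hk_int : ∫ u, k u = 1) (hg : Continuous g) (t : ℝ) :
    Tendsto (fun ε => mollify k ε g t) (𝓝[>] 0) (𝓝 (g t)) := by
  have hcont : Continuous fun ε => ∫ u, k u • g (t - ε * u) :=
    continuous_integral_smul_of_hasCompactSupport hk hk_supp (by fun_prop)
  have hlim := (hcont.tendsto 0).mono_left (nhdsWithin_le_nhds (s := Ioi 0))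
  simp only [zero_mul, sub_zero, integral_smul_const, hk_int, one_smul] at hlim
  refine hlim.congr' ?_
  filter_upwards [self_mem_nhdsWithin] with ε hε
  exact (mollify_apply k g hε t).symm

theorem tendsto_integral_mul_norm_mollify_sub [CompleteSpace E] (hk : Continuous k)
    (hk_supp : HasCompactSupport k) (hk_int : ∫ u, k u = 1) (hg : Continuous g) {w : ℝ → ℝ}
    (hw : Continuous w) (a b : ℝ) :
    Tendsto (fun ε => ∫ t in a..b, w t * ‖mollify k ε g t - g t‖) (𝓝[>] 0) (𝓝 0) := by
  have havg : Continuous fun p : ℝ × ℝ => ∫ u, k u • g (p.2 - p.1 * u) :=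
    continuous_integral_smul_of_hasCompactSupport hk hk_supp (by fun_prop)
  have hcont : Continuous fun ε : ℝ =>
      ∫ t in a..b, w t * ‖(∫ u, k u • g (t - ε * u)) - g t‖ := by
    refine intervalIntegral.continuous_parametric_intervalIntegral_of_continuous' ?_ a b
    exact (hw.comp continuous_snd).mul (havg.sub (hg.comp continuous_snd)).norm
  have hlim := (hcont.tendsto 0).mono_left (nhdsWithin_le_nhds (s := Ioi 0))
  simp only [zero_mul, sub_zero, integral_smul_const, hk_int, one_smul, sub_self, norm_zero,
    mul_zero, intervalIntegral.integral_zero] at hlim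
  refine hlim.congr' ?_
  filter_upwards [self_mem_nhdsWithin] with ε hε
  simp only [mollify_apply k g hε]

end Mollification

section EvenKernel

variable {k : ℝ → ℝ}

theorem odd_deriv_of_even (hk : k.Even) : (deriv k).Odd := fun x => by
  have h := deriv_comp_neg k x
  rw [funext hk] at h
  rw [h, neg_neg]

theorem integral_deriv_mul_self_eq_neg_integral (hk : ContDiff ℝ 1 k)
    (hk_supp : HasCompactSupport k) : ∫ u, deriv k u * u = -∫ u, k u := by
  have hk' : Continuous (deriv k) := hk.continuous_deriv le_rfl
  have hparts := integral_mul_deriv_eq_deriv_mul_of_integrable (u := k) (v := id) (u' := deriv k)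
    (v' := 1) (fun x _ => (hk.differentiable one_ne_zero x).hasDerivAt) (fun x _ => hasDerivAt_id x)
    (by simpa using hk.continuous.integrable_of_hasCompactSupport hk_supp)
    ((hk'.mul continuous_id).integrable_of_hasCompactSupport hk_supp.deriv.mul_right)
    ((hk.continuous.mul continuous_id).integrable_of_hasCompactSupport hk_supp.mul_right)
  simp only [Pi.one_apply, mul_one, id] at hparts
  rw [hparts, neg_neg]

theorem integral_odd_mul {ψ F : ℝ → ℝ} (hψ : ψ.Odd) (hψF : Integrable fun u => ψ u * F u) :
    ∫ u, ψ u * F u = ∫ u, ψ u * ((F u - F (-u)) / 2) := by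
  have hreflect := integral_neg_eq_self (fun u => ψ u * F u) volume
  calc ∫ u, ψ u * F u
      = ((∫ u, ψ u * F u) + ∫ u, ψ (-u) * F (-u)) / 2 := by rw [hreflect]; ring
    _ = ∫ u, (ψ u * F u + ψ (-u) * F (-u)) / 2 := by
        rw [integral_div, integral_add hψF hψF.comp_neg]
    _ = ∫ u, ψ u * ((F u - F (-u)) / 2) := by
        congr 1 with u
        rw [hψ u]; ring

theorem even_convolution {k' : ℝ → ℝ} (hk : k.Even) (hk' : k'.Even) : (k ⋆ k').Even := fun _ =>
  convolution_neg_of_neg_eq _ (.of_forall hk) (.of_forall hk')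

end EvenKernel

theorem intervalIntegral_integral_swap_of_continuous {E : Type*} [NormedAddCommGroup E]
    [NormedSpace ℝ E] {f : ℝ → ℝ → E} {s : Set ℝ} (hf : Continuous (Function.uncurry f))
    (hs : IsCompact s) (hfs : ∀ x, ∀ y ∉ s, f x y = 0) (a b : ℝ) :
    ∫ x in a..b, ∫ y, f x y = ∫ y, ∫ x in a..b, f x y := by
  have hcompact : IntegrableOn (Function.uncurry f) (uIcc a b ×ˢ s) (volume.prod volume) :=
    hf.continuousOn.integrableOn_compact (isCompact_uIcc.prod hs)
  have hstrip : IntegrableOn (Function.uncurry f) (uIcc a b ×ˢ univ) (volume.prod volume) :=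
    hcompact.of_forall_sdiff_eq_zero (measurableSet_uIcc.prod .univ) fun p hp =>
      hfs p.1 p.2 fun hps => hp.2 ⟨hp.1.1, hps⟩
  have hprod : (volume.restrict (uIoc a b)).prod volume
      = (volume.prod volume).restrict (uIoc a b ×ˢ (univ : Set ℝ)) := by
    rw [← Measure.prod_restrict, Measure.restrict_univ]
  refine intervalIntegral_integral_swap ?_
  rw [hprod]
  exact hstrip.mono_set (prod_mono_left uIoc_subset_uIcc)

section Correlation

variable {E : Type*} [NormedAddCommGroup E] [InnerProductSpace ℝ E] {g : ℝ → E}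

/-- The mean correlation of `g` with its translate by `r` over the interval from `x` to `x + r`,
written on the unit interval so that it stays meaningful at `r = 0`. -/
def boundaryCorrelation (g : ℝ → E) (x r : ℝ) : ℝ :=
  ∫ y in (0 : ℝ)..1, inner ℝ (g (x + r * y)) (g (x + r * y - r))

theorem continuous_boundaryCorrelation (hg : Continuous g) (x : ℝ) :
    Continuous (boundaryCorrelation g x) :=
  intervalIntegral.continuous_parametric_intervalIntegral_of_continuous' (by fun_prop) 0 1

theorem boundaryCorrelation_zero (g : ℝ → E) (x : ℝ) : boundaryCorrelation g x 0 = ‖g x‖ ^ 2 := by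
  simp [boundaryCorrelation]

theorem mul_boundaryCorrelation (g : ℝ → E) (x r : ℝ) :
    r * boundaryCorrelation g x r = ∫ s in x..(x + r), inner ℝ (g s) (g (s - r)) := by
  have h := intervalIntegral.mul_integral_comp_add_mul (a := 0) (b := 1)
    (f := fun s => inner ℝ (g s) (g (s - r))) r x
  simpa only [boundaryCorrelation, mul_zero, add_zero, mul_one] using h

theorem integral_inner_translate_sub_integral_inner_translate_neg (hg : Continuous g)
    (a b r : ℝ) :
    (∫ s in a..b, inner ℝ (g s) (g (s - r))) - ∫ s in a..b, inner ℝ (g s) (g (s + r))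
      = r * (boundaryCorrelation g a r - boundaryCorrelation g b r) := by
  have hint : ∀ c d, IntervalIntegrable (fun s => inner ℝ (g s) (g (s - r))) volume c d :=
    (Continuous.intervalIntegrable (by fun_prop))
  have hshift : ∫ s in a..b, inner ℝ (g s) (g (s + r))
      = ∫ s in (a + r)..(b + r), inner ℝ (g s) (g (s - r)) := by
    rw [← intervalIntegral.integral_comp_add_right (fun s => inner ℝ (g s) (g (s - r))) r]
    simp only [add_sub_cancel_right, real_inner_comm]
  rw [hshift, mul_sub, mul_boundaryCorrelation, mul_boundaryCorrelation]
  exact intervalIntegral.integral_interval_sub_interval_comm (hint _ _) (hint _ _) (hint _ _)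

theorem integral_inner_mollify [CompleteSpace E] {ψ : ℝ → ℝ} {ε : ℝ} (hψ : Continuous ψ)
    (hψ_supp : HasCompactSupport ψ) (hg : Continuous g) (hε : 0 < ε) (a b : ℝ) :
    ∫ s in a..b, inner ℝ (g s) (mollify ψ ε g s)
      = ∫ u, ψ u * ∫ s in a..b, inner ℝ (g s) (g (s - ε * u)) := by
  have hcont : Continuous (Function.uncurry fun s u => ψ u * inner ℝ (g s) (g (s - ε * u))) := by
    simp only [Function.uncurry_def]
    fun_prop
  calc ∫ s in a..b, inner ℝ (g s) (mollify ψ ε g s)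
      = ∫ s in a..b, ∫ u, ψ u * inner ℝ (g s) (g (s - ε * u)) := by
        congr 1 with s
        have hint : Integrable fun u => ψ u • g (s - ε * u) :=
          Continuous.integrable_of_hasCompactSupport (by fun_prop) hψ_supp.smul_right
        rw [mollify_apply ψ g hε, ← integral_inner hint]
        simp only [inner_smul_right]
    _ = ∫ u, ∫ s in a..b, ψ u * inner ℝ (g s) (g (s - ε * u)) :=
        intervalIntegral_integral_swap_of_continuous hcont hψ_supp.isCompact
          (fun s u hu => by rw [image_eq_zero_of_notMem_tsupport hu, zero_mul]) a b
    _ = ∫ u, ψ u * ∫ s in a..b, inner ℝ (g s) (g (s - ε * u)) := by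
        simp only [intervalIntegral.integral_const_mul]

theorem integral_inner_deriv_mollify [CompleteSpace E] {k : ℝ → ℝ} {ε : ℝ} (hk : ContDiff ℝ 1 k)
    (hk_supp : HasCompactSupport k) (hk_even : k.Even) (hg : Continuous g) (hε : 0 < ε)
    (a b : ℝ) :
    ∫ s in a..b, inner ℝ (g s) (deriv (mollify k ε g) s)
      = ∫ u, (deriv k u * u) *
          ((boundaryCorrelation g a (ε * u) - boundaryCorrelation g b (ε * u)) / 2) := by
  have hk' : Continuous (deriv k) := hk.continuous_deriv le_rfl
  have hcorr : Continuous fun r => ∫ s in a..b, inner ℝ (g s) (g (s - r)) :=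
    intervalIntegral.continuous_parametric_intervalIntegral_of_continuous' (by fun_prop) a b
  have hint : Integrable fun u => deriv k u * ∫ s in a..b, inner ℝ (g s) (g (s - ε * u)) :=
    (hk'.mul (hcorr.comp (continuous_const_mul ε))).integrable_of_hasCompactSupport
      hk_supp.deriv.mul_right
  simp only [deriv_mollify hk hk_supp hg hε, Pi.smul_apply, inner_smul_right,
    intervalIntegral.integral_const_mul]
  rw [integral_inner_mollify hk' hk_supp.deriv hg hε, integral_odd_mul (odd_deriv_of_even hk_even)
    hint, ← integral_const_mul]
  congr 1 with u
  rw [mul_neg]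
  simp only [sub_neg_eq_add]
  rw [integral_inner_translate_sub_integral_inner_translate_neg hg]
  field_simp

theorem tendsto_integral_inner_deriv_mollify [CompleteSpace E] {k : ℝ → ℝ} (hk : ContDiff ℝ 1 k)
    (hk_supp : HasCompactSupport k) (hk_even : k.Even) (hk_int : ∫ u, k u = 1)
    (hg : Continuous g) (a b : ℝ) :
    Tendsto (fun ε => ∫ s in a..b, inner ℝ (g s) (deriv (mollify k ε g) s)) (𝓝[>] 0)
      (𝓝 ((‖g b‖ ^ 2 - ‖g a‖ ^ 2) / 2)) := by
  have hD := continuous_boundaryCorrelation hg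
  have hcont : Continuous fun ε : ℝ => ∫ u, (deriv k u * u) •
      ((boundaryCorrelation g a (ε * u) - boundaryCorrelation g b (ε * u)) / 2) := by
    refine continuous_integral_smul_of_hasCompactSupport
      ((hk.continuous_deriv le_rfl).mul continuous_id) hk_supp.deriv.mul_right ?_
    exact (((hD a).comp continuous_mul).sub ((hD b).comp continuous_mul)).div_const 2
  have hlim := (hcont.tendsto 0).mono_left (nhdsWithin_le_nhds (s := Ioi 0))
  simp only [zero_mul, boundaryCorrelation_zero, integral_smul_const,
    integral_deriv_mul_self_eq_neg_integral hk hk_supp, hk_int] at hlim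
  rw [neg_one_smul, ← neg_div, neg_sub] at hlim
  refine hlim.congr' ?_
  filter_upwards [self_mem_nhdsWithin] with ε hε
  exact (integral_inner_deriv_mollify hk hk_supp hk_even hg hε a b).symm

end Correlation

section MovingFrame

variable {E : Type*} [NormedAddCommGroup E] [InnerProductSpace ℝ E] {Q : ℝ → E ≃ₗᵢ[ℝ] E}
  {K : NNReal} {k : ℝ → ℝ} {l m : ℝ → E} {ε : ℝ}

/-- Mollification of the curve `l` in the moving frame `Q`, i.e. `Q (k_ε ∗ Qᵀ l)`. The transpose of
the isometry `Q s` is encoded as its inverse. -/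
def frameMollify (Q : ℝ → E ≃ₗᵢ[ℝ] E) (k : ℝ → ℝ) (ε : ℝ) (l : ℝ → E) : ℝ → E :=
  fun t => Q t (mollify k ε (fun s => (Q s).symm (l s)) t)

theorem continuous_frame_symm_apply (hQ : Continuous fun t => (Q t : E →L[ℝ] E))
    (hl : Continuous l) : Continuous fun t => (Q t).symm (l t) := by
  refine continuous_iff_continuousAt.2 fun s => tendsto_iff_norm_sub_tendsto_zero.2 ?_
  have hnorm : ∀ t, ‖(Q t).symm (l t) - (Q s).symm (l s)‖
      = ‖l t - (Q t : E →L[ℝ] E) ((Q s).symm (l s))‖ := fun t => by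
    rw [← (Q t).norm_map, map_sub, LinearIsometryEquiv.apply_symm_apply]
    rfl
  have hcont : Continuous fun t => ‖l t - (Q t : E →L[ℝ] E) ((Q s).symm (l s))‖ := by fun_prop
  simpa [hnorm] using hcont.tendsto s

theorem continuous_frameMollify (hQ : Continuous fun t => (Q t : E →L[ℝ] E)) (hk : Continuous k)
    (hk_supp : HasCompactSupport k) (hl : Continuous l) (hε : 0 < ε) :
    Continuous (frameMollify Q k ε l) :=
  hQ.clm_apply (continuous_mollify hk hk_supp (continuous_frame_symm_apply hQ hl) hε)

theorem frameMollify_frameMollify [CompleteSpace E] {k' : ℝ → ℝ}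
    (hQ : Continuous fun t => (Q t : E →L[ℝ] E)) (hk : Continuous k) (hk_supp : HasCompactSupport k)
    (hk' : Continuous k') (hk'_supp : HasCompactSupport k') (hl : Continuous l) (hε : 0 < ε) :
    frameMollify Q k ε (frameMollify Q k' ε l) = frameMollify Q (k ⋆ k') ε l := by
  funext t
  simp only [frameMollify, LinearIsometryEquiv.symm_apply_apply]
  rw [← mollify_mollify hk hk_supp hk' hk'_supp (continuous_frame_symm_apply hQ hl) hε]

theorem inner_frame_deriv_frame_self {Q' : E →L[ℝ] E} {t : ℝ}
    (hQ : HasDerivAt (fun s => (Q s : E →L[ℝ] E)) Q' t) (x : E) :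
    inner ℝ (Q t x) (Q' x) = 0 := by
  have hderiv := (hQ.clm_apply (hasDerivAt_const t x)).norm_sq
  have hconst : HasDerivAt (fun s => ‖(Q s : E →L[ℝ] E) x‖ ^ 2) 0 t := by
    simpa using hasDerivAt_const t (‖x‖ ^ 2)
  simpa using hderiv.unique hconst

theorem ae_hasDerivAt_frame_apply [FiniteDimensional ℝ E]
    (hQ : LipschitzWith K fun t => (Q t : E →L[ℝ] E)) (hm : Differentiable ℝ m) :
    ∀ᵐ t, HasDerivAt (fun s => Q s (m s))
      (deriv (fun s => (Q s : E →L[ℝ] E)) t (m t) + Q t (deriv m t)) t :=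
  hQ.ae_differentiableAt_real.mono fun t ht => ht.hasDerivAt.clm_apply (hm t).hasDerivAt

theorem ae_inner_frame_deriv_frame_apply [FiniteDimensional ℝ E]
    (hQ : LipschitzWith K fun t => (Q t : E →L[ℝ] E)) (hm : Differentiable ℝ m) (g : ℝ → E) :
    ∀ᵐ t, inner ℝ (Q t (g t)) (deriv (fun s => Q s (m s)) t)
      = inner ℝ (Q t (g t)) (deriv (fun s => (Q s : E →L[ℝ] E)) t (m t - g t))
        + inner ℝ (g t) (deriv m t) := by
  filter_upwards [hQ.ae_differentiableAt_real, ae_hasDerivAt_frame_apply hQ hm] with t hQt ht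
  rw [ht.deriv, inner_add_right, LinearIsometryEquiv.inner_map_map, map_sub, inner_sub_right,
    inner_frame_deriv_frame_self hQt.hasDerivAt, sub_zero]

theorem integral_inner_deriv_frame_apply_self [FiniteDimensional ℝ E]
    (hQ : LipschitzWith K fun t => (Q t : E →L[ℝ] E)) (hm : ContDiff ℝ 1 m) (a b : ℝ) :
    ∫ t in a..b, inner ℝ (Q t (m t)) (deriv (fun s => Q s (m s)) t)
      = (‖m b‖ ^ 2 - ‖m a‖ ^ 2) / 2 := by
  have hm' : Differentiable ℝ m := hm.differentiable one_ne_zero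
  have hcont : Continuous fun t => 2 * inner ℝ (m t) (deriv m t) :=
    (hm.continuous.inner (hm.continuous_deriv le_rfl)).const_mul 2
  have hftc := intervalIntegral.integral_eq_sub_of_hasDerivAt
    (fun t _ => (hm' t).hasDerivAt.norm_sq) (hcont.intervalIntegrable a b)
  rw [← hftc, intervalIntegral.integral_const_mul, mul_div_cancel_left₀ _ two_ne_zero]
  refine intervalIntegral.integral_congr_ae ?_
  filter_upwards [ae_inner_frame_deriv_frame_apply hQ hm' m] with t ht _
  rw [ht, sub_self, map_zero, inner_zero_right, zero_add]

theorem norm_inner_frame_deriv_frame_le (hQ : LipschitzWith K fun t => (Q t : E →L[ℝ] E))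
    (t : ℝ) (x y : E) :
    ‖inner ℝ (Q t x) (deriv (fun s => (Q s : E →L[ℝ] E)) t y)‖ ≤ K * ‖x‖ * ‖y‖ := by
  calc ‖inner ℝ (Q t x) (deriv (fun s => (Q s : E →L[ℝ] E)) t y)‖
      ≤ ‖Q t x‖ * ‖deriv (fun s => (Q s : E →L[ℝ] E)) t y‖ := norm_inner_le_norm _ _
    _ ≤ ‖x‖ * (K * ‖y‖) := by
        rw [LinearIsometryEquiv.norm_map]
        gcongr
        exact ContinuousLinearMap.le_of_opNorm_le _ (norm_deriv_le_of_lipschitz hQ) y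
    _ = K * ‖x‖ * ‖y‖ := by ring

theorem norm_integral_inner_deriv_frame_apply_sub_le [FiniteDimensional ℝ E]
    (hQ : LipschitzWith K fun t => (Q t : E →L[ℝ] E)) (hm : ContDiff ℝ 1 m) {g : ℝ → E}
    (hg : Continuous g) (a b : ℝ) :
    ‖(∫ t in a..b, inner ℝ (Q t (g t)) (deriv (fun s => Q s (m s)) t))
        - ∫ t in a..b, inner ℝ (g t) (deriv m t)‖
      ≤ |∫ t in a..b, K * ‖g t‖ * ‖m t - g t‖| := by
  have hbound : Continuous fun t => K * ‖g t‖ * ‖m t - g t‖ := by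
    have hm_cont := hm.continuous
    fun_prop
  set e := fun t => inner ℝ (Q t (g t)) (deriv (fun s => (Q s : E →L[ℝ] E)) t (m t - g t))
  have he_le : ∀ t, ‖e t‖ ≤ K * ‖g t‖ * ‖m t - g t‖ := fun t =>
    norm_inner_frame_deriv_frame_le hQ t _ _
  have he_meas : AEStronglyMeasurable e := by
    have hQg : Continuous fun t => Q t (g t) := hQ.continuous.clm_apply hg
    have hQ' := (stronglyMeasurable_deriv fun s => (Q s : E →L[ℝ] E)).aestronglyMeasurable
      (μ := volume)
    exact hQg.aestronglyMeasurable.inner ((ContinuousLinearMap.id ℝ (E →L[ℝ] E))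
      |>.aestronglyMeasurable_comp₂ hQ' (hm.continuous.sub hg).aestronglyMeasurable)
  have he_int : IntervalIntegrable e volume a b :=
    (hbound.intervalIntegrable a b).mono_fun' he_meas.restrict (.of_forall he_le)
  have hgm_int : IntervalIntegrable (fun t => inner ℝ (g t) (deriv m t)) volume a b :=
    (hg.inner (hm.continuous_deriv le_rfl)).intervalIntegrable a b
  rw [intervalIntegral.integral_congr_ae (g := fun t => e t + inner ℝ (g t) (deriv m t))
    ((ae_inner_frame_deriv_frame_apply hQ (hm.differentiable one_ne_zero) g).mono fun t ht _ => ht),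
    intervalIntegral.integral_add he_int hgm_int, add_sub_cancel_right]
  exact intervalIntegral.norm_integral_le_abs_of_norm_le (.of_forall he_le)
    (hbound.intervalIntegrable a b)

theorem tendsto_frameMollify [CompleteSpace E] (hQ : Continuous fun t => (Q t : E →L[ℝ] E))
    (hk : Continuous k) (hk_supp : HasCompactSupport k) (hk_int : ∫ u, k u = 1)
    (hl : Continuous l) (t : ℝ) :
    Tendsto (fun ε => frameMollify Q k ε l t) (𝓝[>] 0) (𝓝 (l t)) := by
  have hlim := tendsto_mollify hk hk_supp hk_int (continuous_frame_symm_apply hQ hl) t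
  simpa only [frameMollify, Function.comp_def, LinearIsometryEquiv.apply_symm_apply] using
    ((Q t).continuous.tendsto _).comp hlim

theorem tendsto_integral_inner_deriv_frameMollify_self [FiniteDimensional ℝ E]
    (hQ : LipschitzWith K fun t => (Q t : E →L[ℝ] E)) (hk : ContDiff ℝ 1 k)
    (hk_supp : HasCompactSupport k) (hk_int : ∫ u, k u = 1) (hl : Continuous l) (a b : ℝ) :
    Tendsto (fun ε => ∫ t in a..b,
        inner ℝ (frameMollify Q k ε l t) (deriv (frameMollify Q k ε l) t)) (𝓝[>] 0)
      (𝓝 ((‖l b‖ ^ 2 - ‖l a‖ ^ 2) / 2)) := by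
  have := FiniteDimensional.complete ℝ E
  have hlim := fun t =>
    (tendsto_frameMollify hQ.continuous hk.continuous hk_supp hk_int hl t).norm.pow 2
  refine (((hlim b).sub (hlim a)).div_const 2).congr' ?_
  filter_upwards [self_mem_nhdsWithin] with ε hε
  have hm := contDiff_mollify hk hk_supp (continuous_frame_symm_apply hQ.continuous hl) hε
  have hftc := integral_inner_deriv_frame_apply_self hQ hm a b
  have hnorm : ∀ t, ‖mollify k ε (fun s => (Q s).symm (l s)) t‖ = ‖frameMollify Q k ε l t‖ :=
    fun t => ((Q t).norm_map _).symm
  rw [hnorm, hnorm] at hftc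
  exact hftc.symm

theorem tendsto_integral_inner_deriv_frameMollify [FiniteDimensional ℝ E]
    (hQ : LipschitzWith K fun t => (Q t : E →L[ℝ] E)) (hk : ContDiff ℝ 1 k)
    (hk_supp : HasCompactSupport k) (hk_even : k.Even) (hk_int : ∫ u, k u = 1)
    (hl : Continuous l) (a b : ℝ) :
    Tendsto (fun ε => ∫ t in a..b, inner ℝ (l t) (deriv (frameMollify Q k ε l) t)) (𝓝[>] 0)
      (𝓝 ((‖l b‖ ^ 2 - ‖l a‖ ^ 2) / 2)) := by
  have := FiniteDimensional.complete ℝ E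
  let g := fun t => (Q t).symm (l t)
  have hg : Continuous g := continuous_frame_symm_apply hQ.continuous hl
  have hg_norm : ∀ t, ‖g t‖ = ‖l t‖ := fun t => (Q t).symm.norm_map (l t)
  have hQg : ∀ t, Q t (g t) = l t := fun t => (Q t).apply_symm_apply (l t)
  have hmain := tendsto_integral_inner_deriv_mollify hk hk_supp hk_even hk_int hg a b
  have herror := (tendsto_integral_mul_norm_mollify_sub hk.continuous hk_supp hk_int hg
    (hg.norm.const_mul (K : ℝ)) a b).abs
  rw [abs_zero] at herror
  rw [hg_norm, hg_norm] at hmain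
  have hle : ∀ᶠ ε in 𝓝[>] (0 : ℝ),
      ‖(∫ t in a..b, inner ℝ (l t) (deriv (frameMollify Q k ε l) t))
          - ∫ t in a..b, inner ℝ (g t) (deriv (mollify k ε g) t)‖
        ≤ |∫ t in a..b, K * ‖g t‖ * ‖mollify k ε g t - g t‖| := by
    filter_upwards [self_mem_nhdsWithin] with ε hε
    have hle := norm_integral_inner_deriv_frame_apply_sub_le hQ
      (contDiff_mollify hk hk_supp hg hε) hg a b
    simp only [hQg] at hle
    exact hle
  simpa only [sub_add_cancel, zero_add] using (squeeze_zero_norm' hle herror).add hmain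

theorem mollification_identity_with_rotations_general [FiniteDimensional ℝ E] {η : ℝ → ℝ}
    (hη : ContDiff ℝ 1 η) (hη_supp : HasCompactSupport η) (hη_even : η.Even)
    (hη_int : ∫ u, η u = 1) (hQ : LipschitzWith K fun t => (Q t : E →L[ℝ] E))
    (hl : Continuous l) (a b : ℝ) :
    Tendsto (fun ε =>
        (∫ t in a..b, inner ℝ (deriv (frameMollify Q η ε l) t) (frameMollify Q η ε l t))
          - (-(∫ s in a..b, inner ℝ (l s) (deriv (frameMollify Q η ε (frameMollify Q η ε l)) s))
              + inner ℝ (l b) (frameMollify Q η ε (frameMollify Q η ε l) b)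
              - inner ℝ (l a) (frameMollify Q η ε (frameMollify Q η ε l) a)))
      (𝓝[>] 0) (𝓝 0) := by
  have := FiniteDimensional.complete ℝ E
  have hk : ContDiff ℝ 1 (η ⋆ η) :=
    hη_supp.contDiff_convolution_left _ hη hη.continuous.locallyIntegrable
  have hk_supp : HasCompactSupport (η ⋆ η) := hη_supp.convolution _ hη_supp
  have hk_int : ∫ t, (η ⋆ η) t = 1 := by
    have hη_integrable := hη.continuous.integrable_of_hasCompactSupport hη_supp (μ := volume)
    rw [integral_convolution _ hη_integrable hη_integrable, hη_int,
      ContinuousLinearMap.lsmul_apply, one_smul]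
  have hself := tendsto_integral_inner_deriv_frameMollify_self hQ hη hη_supp hη_int hl a b
  have htwice := tendsto_integral_inner_deriv_frameMollify hQ hk hk_supp
    (even_convolution hη_even hη_even) hk_int hl a b
  have hboundary := fun t => (tendsto_const_nhds (x := l t)).inner (𝕜 := ℝ)
    (tendsto_frameMollify hQ.continuous hk.continuous hk_supp hk_int hl t)
  have hlim := hself.sub ((htwice.neg.add (hboundary b)).sub (hboundary a))
  simp only [real_inner_self_eq_norm_sq] at hlim
  convert hlim.congr' ?_ using 2
  · ring
  · filter_upwards [self_mem_nhdsWithin] with ε hε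
    simp only [frameMollify_frameMollify hQ.continuous hη.continuous hη_supp hη.continuous hη_supp
      hl hε, real_inner_comm]

end MovingFrame

section PlanarRotation

theorem rot2_apply_zero (α : ℝ) (x : V2) :
    rot2 α x 0 = Real.cos α * x 0 - Real.sin α * x 1 :=
  rfl

theorem rot2_apply_one (α : ℝ) (x : V2) :
    rot2 α x 1 = Real.sin α * x 0 + Real.cos α * x 1 :=
  rfl

theorem rot2_zero (x : V2) : rot2 0 x = x :=
  PiLp.ext (Fin.forall_fin_two.2 ⟨by simp [rot2_apply_zero], by simp [rot2_apply_one]⟩)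

theorem rot2_rot2 (α β : ℝ) (x : V2) : rot2 α (rot2 β x) = rot2 (α + β) x := by
  refine PiLp.ext (Fin.forall_fin_two.2 ⟨?_, ?_⟩) <;>
    simp only [rot2_apply_zero, rot2_apply_one, Real.cos_add, Real.sin_add] <;> ring

theorem norm_rot2 (α : ℝ) (x : V2) : ‖rot2 α x‖ = ‖x‖ := by
  rw [← sq_eq_sq₀ (norm_nonneg _) (norm_nonneg _)]
  simp only [EuclideanSpace.real_norm_sq_eq, Fin.sum_univ_two, rot2_apply_zero, rot2_apply_one]
  linear_combination (x 0 ^ 2 + x 1 ^ 2) * Real.sin_sq_add_cos_sq α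

theorem norm_sq_rot2_sub_rot2 (α β : ℝ) (x : V2) :
    ‖rot2 α x - rot2 β x‖ ^ 2 = (2 - 2 * Real.cos (α - β)) * ‖x‖ ^ 2 := by
  simp only [EuclideanSpace.real_norm_sq_eq, Fin.sum_univ_two, PiLp.sub_apply, rot2_apply_zero,
    rot2_apply_one, Real.cos_sub]
  linear_combination (x 0 ^ 2 + x 1 ^ 2) * (Real.sin_sq_add_cos_sq α + Real.sin_sq_add_cos_sq β)

/-- The rotation `rot2 α` as a linear isometry of the plane, with inverse `rot2 (-α)`. -/
def planarRotation (α : ℝ) : V2 ≃ₗᵢ[ℝ] V2 where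
  toFun := rot2 α
  invFun := rot2 (-α)
  map_add' x y := by
    refine PiLp.ext (Fin.forall_fin_two.2 ⟨?_, ?_⟩) <;>
      simp only [rot2_apply_zero, rot2_apply_one, PiLp.add_apply] <;> ring
  map_smul' c x := by
    refine PiLp.ext (Fin.forall_fin_two.2 ⟨?_, ?_⟩) <;>
      simp only [rot2_apply_zero, rot2_apply_one, PiLp.smul_apply, smul_eq_mul,
        RingHom.id_apply] <;> ring
  left_inv x := by rw [rot2_rot2, neg_add_cancel, rot2_zero]
  right_inv x := by rw [rot2_rot2, add_neg_cancel, rot2_zero]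
  norm_map' := norm_rot2 α

theorem lipschitzWith_planarRotation :
    LipschitzWith 1 fun α => (planarRotation α : V2 →L[ℝ] V2) := by
  refine .of_dist_le_mul fun α β => ?_
  rw [dist_eq_norm, Real.dist_eq, NNReal.coe_one, one_mul]
  refine ContinuousLinearMap.opNorm_le_bound _ (abs_nonneg _) fun x => ?_
  refine (sq_le_sq₀ (norm_nonneg _) (by positivity)).1 ?_
  calc ‖rot2 α x - rot2 β x‖ ^ 2
      = (2 - 2 * Real.cos (α - β)) * ‖x‖ ^ 2 := norm_sq_rot2_sub_rot2 α β x
    _ ≤ (α - β) ^ 2 * ‖x‖ ^ 2 := by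
        gcongr
        linarith [Real.one_sub_sq_div_two_le_cos (x := α - β)]
    _ = (|α - β| * ‖x‖) ^ 2 := by rw [mul_pow, sq_abs]

theorem dot2_eq_inner (x y : V2) : dot2 x y = inner ℝ x y := by
  simp [dot2, PiLp.inner_apply, Fin.sum_univ_two, mul_comm]

theorem dot2_comm (x y : V2) : dot2 x y = dot2 y x := by
  rw [dot2_eq_inner, dot2_eq_inner, real_inner_comm]

theorem dVec_eq_deriv {f : ℝ → V2} {t : ℝ} (hf : DifferentiableAt ℝ f t) :
    dVec f t = deriv f t := by
  have hcoord : ∀ i, deriv (fun s => f s i) t = deriv f t i := fun i =>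
    ((EuclideanSpace.proj (𝕜 := ℝ) i).hasFDerivAt.comp_hasDerivAt t hf.hasDerivAt).deriv
  exact PiLp.ext (Fin.forall_fin_two.2 ⟨hcoord 0, hcoord 1⟩)

theorem ae_dVec_frameMollify {Q : ℝ → V2 ≃ₗᵢ[ℝ] V2} {K : NNReal} {k : ℝ → ℝ} {l : ℝ → V2} {ε : ℝ}
    (hQ : LipschitzWith K fun t => (Q t : V2 →L[ℝ] V2)) (hk : ContDiff ℝ 1 k)
    (hk_supp : HasCompactSupport k) (hl : Continuous l) (hε : 0 < ε) :
    dVec (frameMollify Q k ε l) =ᵐ[volume] deriv (frameMollify Q k ε l) := by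
  have hm := contDiff_mollify hk hk_supp (continuous_frame_symm_apply hQ.continuous hl) hε
  filter_upwards [ae_hasDerivAt_frame_apply hQ (hm.differentiable one_ne_zero)] with t ht
  exact dVec_eq_deriv ht.differentiableAt

theorem setIntegral_dot2_dVec {f u : ℝ → V2} (hf : dVec f =ᵐ[volume] deriv f) {a b : ℝ}
    (hab : a ≤ b) :
    ∫ t in Ioc a b, dot2 (u t) (dVec f t) = ∫ t in a..b, inner ℝ (u t) (deriv f t) := by
  rw [intervalIntegral.integral_of_le hab]
  refine integral_congr_ae (ae_restrict_of_ae ?_)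
  filter_upwards [hf] with t ht
  rw [ht, dot2_eq_inner]

theorem lmoll_eq_frameMollify (η θ : ℝ → ℝ) (l : ℝ → V2) (ε : ℝ) :
    lmoll η θ l ε = frameMollify (fun t => planarRotation (θ t)) η ε l :=
  rfl

theorem Lmoll_eq_frameMollify (η θ : ℝ → ℝ) (l : ℝ → V2) (ε : ℝ) :
    Lmoll η θ l ε = frameMollify (fun t => planarRotation (θ t)) η ε (lmoll η θ l ε) := by
  funext s
  have hcomm := (planarRotation (θ s)).toContinuousLinearEquiv.integral_comp_comm (μ := volume)
    fun t => moll η ε (s - t) • rot2 (-(θ t)) (lmoll η θ l ε t)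
  simp only [map_smul] at hcomm
  exact hcomm

end PlanarRotation

/-- **Identity (BIGE1)**: mollification identity with rotations.
With `l_ε(t) = Q(t) (η_ε ∗ Qᵀ l)(t)` and `L_ε(s) = ∫ η_ε(s-t) Q(s)Q(t)ᵀ l_ε(t) dt`,
one has `∫₀^τ l_ε'·l_ε = -∫₀^τ l·L_ε' + l(τ)·L_ε(τ) - l(0)·L_ε(0) + o(1)` as `ε → 0⁺`. -/
theorem mollification_identity_with_rotations
    (η : ℝ → ℝ) (hη_smooth : ContDiff ℝ (⊤ : ℕ∞) η)
    (hη_supp : HasCompactSupport η) (hη_supp' : tsupport η ⊆ Ioo (-1 : ℝ) 1)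
    (hη_even : ∀ t, η (-t) = η t)
    (hη_nonneg : ∀ t, 0 ≤ η t) (hη_le_one : ∀ t, η t ≤ 1)
    (hη_one : ∀ᶠ t in 𝓝 (0:ℝ), η t = 1)
    (hη_int : (∫ t : ℝ, η t) = 1)
    (θ : ℝ → ℝ) (hθ_lip : ∃ K : NNReal, LipschitzWith K θ) (hθ_bdd : ∃ C : ℝ, ∀ t, |θ t| ≤ C)
    (l : ℝ → V2) (hl_bdd : ∃ C : ℝ, ∀ t, ‖l t‖ ≤ C)
    (hl_cont : Continuous l) (hl_supp : HasCompactSupport l)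
    (τ : ℝ) (hτ : 0 < τ) :
    Tendsto (fun ε : ℝ =>
        (∫ t in Ioc (0:ℝ) τ, dot2 (dVec (lmoll η θ l ε) t) (lmoll η θ l ε t))
          - (-(∫ s in Ioc (0:ℝ) τ, dot2 (l s) (dVec (Lmoll η θ l ε) s))
              + dot2 (l τ) (Lmoll η θ l ε τ) - dot2 (l 0) (Lmoll η θ l ε 0)))
      (𝓝[>] (0:ℝ)) (𝓝 0) := by
  obtain ⟨K, hθ⟩ := hθ_lip
  have hQ := lipschitzWith_planarRotation.comp hθ
  have hη : ContDiff ℝ 1 η := hη_smooth.of_le (mod_cast le_top)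
  refine (mollification_identity_with_rotations_general hη hη_supp hη_even hη_int hQ hl_cont
    0 τ).congr' ?_
  filter_upwards [self_mem_nhdsWithin] with ε hε
  have hlε := continuous_frameMollify hQ.continuous hη.continuous hη_supp hl_cont hε
  rw [Lmoll_eq_frameMollify, lmoll_eq_frameMollify]
  simp only [dot2_comm (dVec _ _)]
  rw [setIntegral_dot2_dVec (ae_dVec_frameMollify hQ hη hη_supp hl_cont hε) hτ.le,
    setIntegral_dot2_dVec (ae_dVec_frameMollify hQ hη hη_supp hlε hε) hτ.le]
  simp only [dot2_eq_inner, real_inner_comm]
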